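/- arXiv:1201.5334 — 2 statements merged into one kernel-verified Lean document; each statement's English description precedes it below -/
import Mathlib

section
/- Key estimate for the universal uncertainty relation (mixed-state form): for any Hermitian n×n complex matrices N and B and any density matrix ρ, |Tr[(NB − BN)ρ]| ≤ 2·(Tr[N²ρ])^{1/2}·σ(B;ρ). -/
open ComplexOrder

/-- The standard deviation of a Hermitian matrix `B` in the state `ρ`:
`σ(B;ρ)² = Tr[B²ρ] − (Tr[Bρ])²`. -/
noncomputable def stddev {n : ℕ} (B ρ : Matrix (Fin n) (Fin n) ℂ) : ℝ :=
  Real.sqrt ((B * B * ρ).trace.re - ((B * ρ).trace.re) ^ 2)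

/-!
A positive semidefinite `ρ` makes `⟪X, Y⟫ = Tr[Y ρ Xᴴ]` a semi-inner product on matrices. For
Hermitian `N` and `B`, Cauchy–Schwarz bounds both `|Tr[NBρ]|` and `|Tr[BNρ]|` by
`(Tr[N²ρ])^{1/2} (Tr[B²ρ])^{1/2}`. The commutator does not change when `B` is replaced by
`B - Tr[Bρ]`, and for `Tr ρ ≤ 1` this replacement brings `Tr[B²ρ]` down to at most
`Tr[B²ρ] - (Tr[Bρ])²`.
-/

section

open Matrix RCLike

variable {ι : Type*} [Fintype ι]

section CommRing

variable {R : Type*} [CommRing R] [DecidableEq ι]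

theorem commutator_sub_smul_one (A B : Matrix ι ι R) (c : R) :
    A * (B - c • 1) - (B - c • 1) * A = A * B - B * A := by
  simp [Matrix.mul_sub, Matrix.sub_mul]

theorem trace_sub_smul_one_mul_self_mul (B M : Matrix ι ι R) (c : R) :
    ((B - c • 1) * (B - c • 1) * M).trace =
      (B * B * M).trace - 2 * c * (B * M).trace + c ^ 2 * M.trace := by
  simp only [Matrix.sub_mul, Matrix.mul_sub, Matrix.smul_mul, Matrix.mul_smul, Matrix.one_mul,
    Matrix.mul_one, trace_sub, trace_smul, smul_eq_mul]
  ring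

end CommRing

variable {𝕜 : Type*} [RCLike 𝕜] {N A B ρ : Matrix ι ι 𝕜}

theorem norm_trace_mul_mul_le (hρ : ρ.PosSemidef) (A B : Matrix ι ι 𝕜) :
    ‖(A * B * ρ).trace‖ ≤ √(re (A * Aᴴ * ρ).trace) * √(re (Bᴴ * B * ρ).trace) := by
  let := ρ.toMatrixSeminormedAddCommGroup hρ
  let := ρ.toMatrixInnerProductSpace hρ
  have inner_eq (X Y : Matrix ι ι 𝕜) : inner 𝕜 X Y = (Xᴴ * Y * ρ).trace :=
    (trace_mul_comm (Y * ρ) Xᴴ).trans (by rw [Matrix.mul_assoc])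
  simpa only [norm_eq_sqrt_re_inner (𝕜 := 𝕜), inner_eq, conjTranspose_conjTranspose] using
    norm_inner_le_norm (𝕜 := 𝕜) Aᴴ B

theorem norm_trace_commutator_mul_le (hA : A.IsHermitian) (hB : B.IsHermitian)
    (hρ : ρ.PosSemidef) :
    ‖((A * B - B * A) * ρ).trace‖ ≤
      2 * √(re (A * A * ρ).trace) * √(re (B * B * ρ).trace) := by
  have hAB := norm_trace_mul_mul_le hρ A B
  have hBA := norm_trace_mul_mul_le hρ B A
  rw [hA.eq, hB.eq] at hAB hBA
  calc ‖((A * B - B * A) * ρ).trace‖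
    _ = ‖(A * B * ρ).trace - (B * A * ρ).trace‖ := by rw [Matrix.sub_mul, trace_sub]
    _ ≤ ‖(A * B * ρ).trace‖ + ‖(B * A * ρ).trace‖ := norm_sub_le _ _
    _ ≤ 2 * √(re (A * A * ρ).trace) * √(re (B * B * ρ).trace) := by linarith

theorem re_trace_sub_mean_mul_self_mul_le [DecidableEq ι] (B : Matrix ι ι 𝕜)
    (hρ : ρ.trace ≤ 1) {b : ℝ} (hb : b = re (B * ρ).trace) :
    re ((B - (b : 𝕜) • 1) * (B - (b : 𝕜) • 1) * ρ).trace ≤ re (B * B * ρ).trace - b ^ 2 := by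
  have hρ_re : re ρ.trace ≤ 1 := by simpa only [one_re] using (le_iff_re_im.mp hρ).1
  have expand : re ((B - (b : 𝕜) • 1) * (B - (b : 𝕜) • 1) * ρ).trace =
      re (B * B * ρ).trace - 2 * b * b + b ^ 2 * re ρ.trace := by
    rw [trace_sub_smul_one_mul_self_mul, hb]
    norm_cast
    simp only [map_add, map_sub, re_ofReal_mul]
  rw [expand]
  linarith [mul_le_mul_of_nonneg_left hρ_re (sq_nonneg b)]

theorem commutator_bound_mixed_general (hN : N.IsHermitian) (hB : B.IsHermitian)
    (hρ : ρ.PosSemidef) (hρtr : ρ.trace ≤ 1) :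
    ‖((N * B - B * N) * ρ).trace‖ ≤
      2 * √(re (N * N * ρ).trace) * √(re (B * B * ρ).trace - re (B * ρ).trace ^ 2) := by
  classical
  set b := re (B * ρ).trace with hb
  have hB_sub : (B - (b : 𝕜) • 1).IsHermitian :=
    hB.sub (isHermitian_one.smul (conj_ofReal b))
  calc ‖((N * B - B * N) * ρ).trace‖
    _ = ‖((N * (B - (b : 𝕜) • 1) - (B - (b : 𝕜) • 1) * N) * ρ).trace‖ := by
      rw [commutator_sub_smul_one]
    _ ≤ 2 * √(re (N * N * ρ).trace) *
          √(re ((B - (b : 𝕜) • 1) * (B - (b : 𝕜) • 1) * ρ).trace) :=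
      norm_trace_commutator_mul_le hN hB_sub hρ
    _ ≤ 2 * √(re (N * N * ρ).trace) * √(re (B * B * ρ).trace - b ^ 2) := by
      gcongr
      exact re_trace_sub_mean_mul_self_mul_le B hρtr hb

end

/-- Key estimate for the universal uncertainty relation (mixed-state form). -/
theorem commutator_bound_mixed {n : ℕ} (hn : 0 < n)
    (N B ρ : Matrix (Fin n) (Fin n) ℂ)
    (hN : N.IsHermitian) (hB : B.IsHermitian)
    (hρ : ρ.PosSemidef) (hρtr : ρ.trace = 1) :
    ‖((N * B - B * N) * ρ).trace‖ ≤
      2 * Real.sqrt ((N * N * ρ).trace.re) * stddev B ρ :=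
  commutator_bound_mixed_general hN hB hρ hρtr.le
end

section
/- Constraint for non-disturbing measurements: let A, B, N, D be Hermitian n×n complex matrices such that (A + N)(B + D) = (B + D)(A + N), and let ρ be a density matrix with Tr[D²ρ] = 0 (the disturbance of B vanishes). Then (Tr[N²ρ])^{1/2}·σ(B;ρ) ≥ (1/2)·|Tr[(AB − BA)ρ]|. -/
open ComplexOrder

/-!
A positive semidefinite `ρ` makes `⟪X, Y⟫ = Tr[Xᴴ Y ρ]` a semi-inner product on matrices, whose
Cauchy–Schwarz inequality does all the work. A Hermitian `D` with `Tr[D² ρ] = 0` is a null vector,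
so expectations of commutators with `D` vanish and the expectation of `⁅A + N, B + D⁆`
reduces to that of `⁅A, B⁆ + ⁅N, B⁆`. Hence `|Tr[⁅A, B⁆ ρ]| = |Tr[⁅N, B⁆ ρ]|`, to which Robertson's
argument applies: centre `B` at its mean and bound the two halves of the commutator separately.
-/

section TraceUncertainty

open Matrix

variable {𝕜 ι : Type*} [RCLike 𝕜] [Fintype ι] {ρ : Matrix ι ι 𝕜}

theorem norm_trace_conjTranspose_mul_mul_le (hρ : ρ.PosSemidef) (X Y : Matrix ι ι 𝕜) :
    ‖(Xᴴ * Y * ρ).trace‖ ≤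
      √(RCLike.re (Xᴴ * X * ρ).trace) * √(RCLike.re (Yᴴ * Y * ρ).trace) := by
  let := ρ.toMatrixSeminormedAddCommGroup hρ
  let := ρ.toMatrixInnerProductSpace hρ
  have hinner (U V : Matrix ι ι 𝕜) : (Uᴴ * V * ρ).trace = inner 𝕜 U V :=
    (trace_mul_cycle V ρ Uᴴ).symm
  simpa only [hinner, ← norm_eq_sqrt_re_inner] using norm_inner_le_norm (𝕜 := 𝕜) X Y

theorem norm_trace_mul_mul_le_s7 (hρ : ρ.PosSemidef) {X Y : Matrix ι ι 𝕜}
    (hX : X.IsHermitian) (hY : Y.IsHermitian) :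
    ‖(X * Y * ρ).trace‖ ≤ √(RCLike.re (X * X * ρ).trace) * √(RCLike.re (Y * Y * ρ).trace) := by
  simpa only [hX.eq, hY.eq] using norm_trace_conjTranspose_mul_mul_le hρ X Y

theorem norm_trace_lie_mul_le (hρ : ρ.PosSemidef) {X Y : Matrix ι ι 𝕜}
    (hX : X.IsHermitian) (hY : Y.IsHermitian) :
    ‖(⁅X, Y⁆ * ρ).trace‖ ≤
      2 * (√(RCLike.re (X * X * ρ).trace) * √(RCLike.re (Y * Y * ρ).trace)) := by
  have hXY := norm_trace_mul_mul_le_s7 hρ hX hY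
  have hYX := norm_trace_mul_mul_le_s7 hρ hY hX
  calc ‖(⁅X, Y⁆ * ρ).trace‖ = ‖(X * Y * ρ).trace - (Y * X * ρ).trace‖ := by
        rw [Ring.lie_def, Matrix.sub_mul, trace_sub]
    _ ≤ ‖(X * Y * ρ).trace‖ + ‖(Y * X * ρ).trace‖ := norm_sub_le _ _
    _ ≤ _ := by linarith

theorem trace_lie_mul_eq_zero (hρ : ρ.PosSemidef) {D : Matrix ι ι 𝕜} (hD : D.IsHermitian)
    (hDρ : (D * D * ρ).trace = 0) (X : Matrix ι ι 𝕜) : (⁅X, D⁆ * ρ).trace = 0 := by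
  have hXD : (X * D * ρ).trace = 0 := by
    simpa [hD.eq, hDρ] using norm_trace_conjTranspose_mul_mul_le hρ Xᴴ D
  have hDX : (D * X * ρ).trace = 0 := by
    simpa [hD.eq, hDρ] using norm_trace_conjTranspose_mul_mul_le hρ D X
  rw [Ring.lie_def, Matrix.sub_mul, trace_sub, hXD, hDX, sub_zero]

theorem re_trace_sub_mean_mul_self_mul [DecidableEq ι] (hρtr : ρ.trace = 1) (B : Matrix ι ι 𝕜) :
    RCLike.re ((B - RCLike.re (B * ρ).trace • 1) * (B - RCLike.re (B * ρ).trace • 1) * ρ).trace =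
      RCLike.re (B * B * ρ).trace - RCLike.re (B * ρ).trace ^ 2 := by
  simp only [Matrix.sub_mul, Matrix.mul_sub, Matrix.smul_mul, Matrix.mul_smul, Matrix.one_mul,
    Matrix.mul_one, trace_sub, trace_smul, hρtr, map_sub, RCLike.smul_re, RCLike.one_re]
  ring

theorem norm_trace_lie_mul_le_mul_sqrt_variance (hρ : ρ.PosSemidef) (hρtr : ρ.trace = 1)
    {N B : Matrix ι ι 𝕜} (hN : N.IsHermitian) (hB : B.IsHermitian) :
    ‖(⁅N, B⁆ * ρ).trace‖ ≤
      2 * (√(RCLike.re (N * N * ρ).trace) *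
        √(RCLike.re (B * B * ρ).trace - RCLike.re (B * ρ).trace ^ 2)) := by
  classical
  set μ : ℝ := RCLike.re (B * ρ).trace with hμ
  have hB₀ : (B - μ • 1).IsHermitian := hB.sub (isHermitian_one.smul (.all μ))
  have hlie : ⁅N, B - μ • 1⁆ = ⁅N, B⁆ := by
    simp [Ring.lie_def, Matrix.mul_sub, Matrix.sub_mul]
  rw [← hlie, hμ, ← re_trace_sub_mean_mul_self_mul hρtr]
  exact norm_trace_lie_mul_le hρ hN hB₀

theorem nondisturbing_constraint_general (hρ : ρ.PosSemidef) (hρtr : ρ.trace = 1)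
    {A B N D : Matrix ι ι 𝕜} (hB : B.IsHermitian) (hN : N.IsHermitian) (hD : D.IsHermitian)
    (hcomm : (⁅A + N, B + D⁆ * ρ).trace = 0) (hdist : (D * D * ρ).trace = 0) :
    1 / 2 * ‖(⁅A, B⁆ * ρ).trace‖ ≤
      √(RCLike.re (N * N * ρ).trace) *
        √(RCLike.re (B * B * ρ).trace - RCLike.re (B * ρ).trace ^ 2) := by
  have hsplit : ⁅A + N, B + D⁆ = ⁅A, B⁆ + ⁅N, B⁆ + ⁅A + N, D⁆ := by
    simp only [Ring.lie_def, Matrix.add_mul, Matrix.mul_add]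
    abel
  have hsum : (⁅A, B⁆ * ρ).trace + (⁅N, B⁆ * ρ).trace = 0 := by
    rwa [hsplit, Matrix.add_mul, Matrix.add_mul, trace_add, trace_add,
      trace_lie_mul_eq_zero hρ hD hdist, add_zero] at hcomm
  rw [eq_neg_of_add_eq_zero_left hsum, norm_neg]
  linarith [norm_trace_lie_mul_le_mul_sqrt_variance hρ hρtr hN hB]

end TraceUncertainty

/-- Constraint for non-disturbing measurements. -/
theorem nondisturbing_constraint {n : ℕ} (hn : 0 < n)
    (A B N D ρ : Matrix (Fin n) (Fin n) ℂ)
    (hA : A.IsHermitian) (hB : B.IsHermitian)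
    (hN : N.IsHermitian) (hD : D.IsHermitian)
    (hcomm : (A + N) * (B + D) = (B + D) * (A + N))
    (hρ : ρ.PosSemidef) (hρtr : ρ.trace = 1)
    (hdist : (D * D * ρ).trace = 0) :
    Real.sqrt ((N * N * ρ).trace.re) * stddev B ρ ≥
      (1 / 2) * ‖((A * B - B * A) * ρ).trace‖ := by
  exact nondisturbing_constraint_general hρ hρtr hB hN hD
    (by rw [Commute.lie_eq hcomm, zero_mul, Matrix.trace_zero]) hdist
end
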